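/- Let p ∈ (0,1] and let ξ ∼ Bernoulli(p). Then the smoothed estimator ḡ_T is a probability-p zero-chain: for every x ∈ ℝ^T, P_ξ( prog_0(ḡ_T(x,ξ)) = prog_{1/4}(x) + 1 ) ≤ p, and P_ξ( prog_0(ḡ_T(x,ξ)) > prog_{1/4}(x) + 1 ) = 0. -/

import Mathlib

open MeasureTheory

/-- The scalar function `Ψ` of the hard-instance construction. -/
noncomputable def Psi (t : ℝ) : ℝ :=
  if t ≤ 1 / 2 then 0 else Real.exp (1 - 1 / (2 * t - 1) ^ 2)

/-- The scalar function `Φ(t) = √e ∫_{−∞}^t e^{−τ²/2} dτ` of the hard-instance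
construction. -/
noncomputable def Phi (t : ℝ) : ℝ :=
  Real.sqrt (Real.exp 1) * ∫ τ in Set.Iic t, Real.exp (-τ ^ 2 / 2)

/-- The hard-instance chain function `F_T` on `ℝ^{T+1}` (so the paper's dimension `T ≥ 1`
is `T + 1` here; the paper's coordinate `xᵢ`, `1 ≤ i ≤ T`, is the zero-based coordinate
`x (i−1)`). -/
noncomputable def chainF (T : ℕ) (x : EuclideanSpace ℝ (Fin (T + 1))) : ℝ :=
  -Psi 1 * Phi (x 0) +
    ∑ i : Fin T,
      (Psi (-(x i.castSucc)) * Phi (-(x i.succ)) - Psi (x i.castSucc) * Phi (x i.succ))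

/-- `prog α x` is the largest one-based index `i ∈ {0, 1, …, n}` such that `|xᵢ| > α`
(with the paper's convention `x₀ ≡ 1`, so the value `0` is allowed and returned when no
coordinate exceeds `α`). -/
noncomputable def prog {n : ℕ} (α : ℝ) (x : EuclideanSpace ℝ (Fin n)) : ℕ :=
  (Finset.univ.filter fun i : Fin n => α < |x i|).sup fun i => (i : ℕ) + 1

/-- The bump function `Λ` supported on `(1/4, 1/2)`. -/
noncomputable def Lam (t : ℝ) : ℝ :=
  if 1 / 4 < t ∧ t < 1 / 2 then
    Real.exp (-1 / (100 * (t - 1 / 4) * (1 / 2 - t)))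
  else 0

/-- The integrated bump function `Γ(t) = (∫_{1/4}^t Λ) / (∫_{1/4}^{1/2} Λ)`. -/
noncomputable def Gam (t : ℝ) : ℝ :=
  (∫ τ in (1 / 4 : ℝ)..t, Lam τ) / ∫ τ in (1 / 4 : ℝ)..(1 / 2 : ℝ), Lam τ

/-- `Θ_i(x) = Γ(1 − ‖(Γ(|x_i|), …, Γ(|x_T|))‖₂)`. -/
noncomputable def Theta (T : ℕ) (x : EuclideanSpace ℝ (Fin (T + 1)))
    (i : Fin (T + 1)) : ℝ :=
  Gam (1 - Real.sqrt (∑ j ∈ Finset.univ.filter fun j : Fin (T + 1) => i ≤ j,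
    Gam |x j| ^ 2))

/-- The smoothed estimator `[ḡ_T(x,ξ)]ᵢ = ∂ᵢF_T(x)·(1 + Θᵢ(x)(ξ/p − 1))`, for
`ξ ∈ {0, 1} ⊆ ℝ`. -/
noncomputable def gbar (T : ℕ) (p : ℝ) (x : EuclideanSpace ℝ (Fin (T + 1)))
    (ξ : ℝ) : EuclideanSpace ℝ (Fin (T + 1)) :=
  WithLp.toLp 2 fun i => gradient (chainF T) x i * (1 + Theta T x i * (ξ / p - 1))

/-!
Let `k = prog (1 / 4) x`, so every (one-based) coordinate of `x` past `k` is at most `1 / 4` in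
absolute value. Since `Psi` vanishes on `(-∞, 1 / 2]`, the coordinates from `k + 2` on enter
`chainF` only through terms that are zero near `x`, so the corresponding partial derivatives are
zero, whatever `ξ` is. Past `k` the values `Gam |x j|` are all zero, so `Theta T x i = Gam 1 = 1`
and the factor `1 + Theta T x i * (ξ / p - 1)` is zero when `ξ = 0`. Hence the estimator reaches
coordinate `k + 1` only when `ξ = 1`, an event of probability `p`, and never goes further.
-/

open Filter Topology

theorem prog_le_iff {n : ℕ} {α : ℝ} {x : EuclideanSpace ℝ (Fin n)} {k : ℕ} :
    prog α x ≤ k ↔ ∀ i : Fin n, k ≤ i → |x i| ≤ α := by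
  simp only [prog, Finset.sup_le_iff, Finset.mem_filter, Finset.mem_univ, true_and,
    Order.add_one_le_iff]
  exact forall_congr' fun i => by rw [← not_lt, ← not_le, not_imp_comm, not_lt]

theorem Lam_eq_zero_of_le {t : ℝ} (ht : t ≤ 1 / 4) : Lam t = 0 :=
  if_neg fun h => ht.not_gt h.1

theorem Lam_eq_zero_of_ge {t : ℝ} (ht : 1 / 2 ≤ t) : Lam t = 0 :=
  if_neg fun h => ht.not_gt h.2

theorem Lam_pos {t : ℝ} (ht : t ∈ Set.Ioo (1 / 4 : ℝ) (1 / 2)) : 0 < Lam t := by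
  rw [Lam, if_pos (Set.mem_Ioo.mp ht)]
  exact Real.exp_pos _

theorem measurable_Lam : Measurable Lam :=
  Measurable.ite (measurableSet_Ioo (a := (1 / 4 : ℝ)) (b := 1 / 2)) (by fun_prop)
    measurable_const

theorem norm_Lam_le_one (t : ℝ) : ‖Lam t‖ ≤ 1 := by
  unfold Lam
  split_ifs with h
  · have h_left : 0 < t - 1 / 4 := by linarith
    have h_right : 0 < 1 / 2 - t := by linarith
    rw [Real.norm_eq_abs, Real.abs_exp, Real.exp_le_one_iff]
    exact div_nonpos_of_nonpos_of_nonneg (by norm_num) (by positivity)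
  · simp

theorem intervalIntegrable_Lam (a b : ℝ) : IntervalIntegrable Lam volume a b :=
  (intervalIntegrable_const (c := (1 : ℝ))).mono_fun measurable_Lam.aestronglyMeasurable <|
    .of_forall fun t => by simpa using norm_Lam_le_one t

theorem Gam_eq_zero_of_le {t : ℝ} (ht : t ≤ 1 / 4) : Gam t = 0 := by
  have h_int : ∫ τ in (1 / 4 : ℝ)..t, Lam τ = 0 :=
    intervalIntegral.integral_zero_ae <| .of_forall fun s hs =>
      Lam_eq_zero_of_le (Set.uIoc_of_ge ht ▸ hs).2
  rw [Gam, h_int, zero_div]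

theorem Gam_eq_one_of_ge {t : ℝ} (ht : 1 / 2 ≤ t) : Gam t = 1 := by
  have h_pos : 0 < ∫ τ in (1 / 4 : ℝ)..(1 / 2 : ℝ), Lam τ :=
    intervalIntegral.intervalIntegral_pos_of_pos_on (intervalIntegrable_Lam _ _)
      (fun _ => Lam_pos) (by norm_num)
  have h_tail : ∫ τ in (1 / 2 : ℝ)..t, Lam τ = 0 :=
    intervalIntegral.integral_zero_ae <| .of_forall fun s hs =>
      Lam_eq_zero_of_ge (Set.uIoc_of_le ht ▸ hs).1.le
  rw [Gam, ← intervalIntegral.integral_add_adjacent_intervals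
    (intervalIntegrable_Lam _ (1 / 2)) (intervalIntegrable_Lam _ _), h_tail, add_zero,
    div_self h_pos.ne']

theorem Theta_eq_one_of_abs_le {T : ℕ} {x : EuclideanSpace ℝ (Fin (T + 1))} {i : Fin (T + 1)}
    (h : ∀ j, i ≤ j → |x j| ≤ 1 / 4) : Theta T x i = 1 := by
  have h_sum : ∑ j with i ≤ j, Gam |x j| ^ 2 = 0 :=
    Finset.sum_eq_zero fun j hj => by
      rw [Gam_eq_zero_of_le (h j (Finset.mem_filter.mp hj).2), zero_pow two_ne_zero]
  rw [Theta, h_sum, Real.sqrt_zero, sub_zero]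
  exact Gam_eq_one_of_ge (by norm_num)

theorem Psi_eq_zero_of_le {t : ℝ} (ht : t ≤ 1 / 2) : Psi t = 0 :=
  if_pos ht

theorem differentiable_mul_abs : Differentiable ℝ fun u : ℝ => u * |u| := by
  intro u
  rcases eq_or_ne u 0 with rfl | hu
  · have h_deriv : HasDerivAt (fun u : ℝ => u * |u|) 0 0 := by
      rw [hasDerivAt_iff_tendsto_slope_zero]
      have h_abs : Tendsto (fun u : ℝ => |u|) (𝓝[≠] 0) (𝓝 0) :=
        (continuous_abs.tendsto' (0 : ℝ) 0 abs_zero).mono_left nhdsWithin_le_nhds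
      refine h_abs.congr' ?_
      filter_upwards [self_mem_nhdsWithin] with u (hu : u ≠ 0)
      simp [hu]
    exact h_deriv.differentiableAt
  · exact differentiableAt_id.mul (differentiableAt_abs hu)

-- The sign in `u * |u|` puts both branches of `Psi` into the one smooth function
-- `expNegInvGlue`, which vanishes on the negative half-line.
theorem Psi_eq_expNegInvGlue (t : ℝ) :
    Psi t = Real.exp 1 * expNegInvGlue ((2 * t - 1) * |2 * t - 1|) := by
  rcases le_or_gt t (1 / 2) with ht | ht
  · have hu : 2 * t - 1 ≤ 0 := by linarith
    have h_arg : (2 * t - 1) * |2 * t - 1| ≤ 0 :=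
      mul_nonpos_of_nonpos_of_nonneg hu (abs_nonneg _)
    rw [Psi_eq_zero_of_le ht, expNegInvGlue.zero_of_nonpos h_arg, mul_zero]
  · have hu : 0 < 2 * t - 1 := by linarith
    rw [Psi, if_neg ht.not_ge, abs_of_pos hu, expNegInvGlue, if_neg (mul_pos hu hu).not_ge,
      ← Real.exp_add, ← sq, one_div, sub_eq_add_neg]

theorem differentiable_Psi : Differentiable ℝ Psi := by
  have h_glue : Differentiable ℝ expNegInvGlue :=
    (expNegInvGlue.contDiff (n := 1)).differentiable one_ne_zero
  have h_affine : Differentiable ℝ fun t : ℝ => 2 * t - 1 := by fun_prop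
  rw [funext Psi_eq_expNegInvGlue]
  exact (h_glue.comp (differentiable_mul_abs.comp h_affine)).const_mul _

theorem differentiable_integral_Iic {E : Type*} [NormedAddCommGroup E] [NormedSpace ℝ E]
    [CompleteSpace E] {f : ℝ → E} (hf : Continuous f) (hfi : Integrable f) :
    Differentiable ℝ fun t => ∫ τ in Set.Iic t, f τ := by
  have h_split (t : ℝ) :
      ∫ τ in Set.Iic t, f τ = (∫ τ in Set.Iic 0, f τ) + ∫ τ in (0 : ℝ)..t, f τ :=
    eq_add_of_sub_eq' <|
      intervalIntegral.integral_Iic_sub_Iic hfi.integrableOn hfi.integrableOn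
  rw [funext h_split]
  exact (differentiable_const _).add (intervalIntegral.differentiable_integral_of_continuous hf)

theorem differentiable_Phi : Differentiable ℝ Phi := by
  have h_gauss : Integrable fun τ : ℝ => Real.exp (-τ ^ 2 / 2) :=
    (integrable_exp_neg_mul_sq one_half_pos).congr (.of_forall fun τ => by ring_nf)
  exact (differentiable_integral_Iic (by fun_prop) h_gauss).const_mul _

theorem differentiable_chainF (T : ℕ) : Differentiable ℝ (chainF T) := by
  have hPsi := differentiable_Psi
  have hPhi := differentiable_Phi
  unfold chainF
  fun_prop

theorem gradient_apply_eq_lineDeriv {ι : Type*} [Fintype ι] [DecidableEq ι]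
    {f : EuclideanSpace ℝ ι → ℝ} {x : EuclideanSpace ℝ ι} (hf : DifferentiableAt ℝ f x) (i : ι) :
    gradient f x i = lineDeriv ℝ f x (EuclideanSpace.single i 1) := by
  rw [hf.lineDeriv_eq_fderiv, ← inner_gradient_left, EuclideanSpace.inner_single_right, one_mul,
    conj_trivial]

-- The coordinate `i.succ` enters `chainF` through `Phi`, multiplied by `Psi (± x i.castSucc)`,
-- and through `Psi`; all of these `Psi` values vanish here.
theorem chainF_congr_of_abs_le {T : ℕ} {x y : EuclideanSpace ℝ (Fin (T + 1))} {i : Fin T}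
    (hxy : ∀ j ≠ i.succ, y j = x j) (h_pred : |x i.castSucc| ≤ 1 / 2)
    (hx : |x i.succ| ≤ 1 / 2) (hy : |y i.succ| ≤ 1 / 2) :
    chainF T y = chainF T x := by
  rw [abs_le'] at h_pred hx hy
  unfold chainF
  rw [hxy 0 (Fin.succ_ne_zero i).symm]
  congr 1
  refine Finset.sum_congr rfl fun j _ => ?_
  by_cases h_first : j.castSucc = i.succ
  · rw [h_first, Psi_eq_zero_of_le hx.1, Psi_eq_zero_of_le hx.2, Psi_eq_zero_of_le hy.1,
      Psi_eq_zero_of_le hy.2]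
    simp only [zero_mul]
  rw [hxy _ h_first]
  by_cases h_second : j = i
  · rw [h_second, Psi_eq_zero_of_le h_pred.1, Psi_eq_zero_of_le h_pred.2]
    simp only [zero_mul]
  · rw [hxy _ ((Fin.succ_injective T).ne h_second)]

theorem gradient_chainF_succ_eq_zero {T : ℕ} {x : EuclideanSpace ℝ (Fin (T + 1))} {i : Fin T}
    (h_pred : |x i.castSucc| ≤ 1 / 2) (hx : |x i.succ| < 1 / 2) :
    gradient (chainF T) x i.succ = 0 := by
  rw [gradient_apply_eq_lineDeriv (differentiable_chainF T x), lineDeriv]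
  have h_near : ∀ᶠ t : ℝ in 𝓝 0, |x i.succ + t| < 1 / 2 := by
    have h_cont : Continuous fun t : ℝ => |x i.succ + t| := by fun_prop
    exact h_cont.continuousAt.eventually_lt_const (by simpa using hx)
  have h_const : (fun t : ℝ => chainF T (x + t • EuclideanSpace.single i.succ (1 : ℝ)))
      =ᶠ[𝓝 0] fun _ => chainF T x := by
    filter_upwards [h_near] with t ht
    exact chainF_congr_of_abs_le (fun j hj => by simp [hj]) h_pred hx.le (by simpa using ht.le)
  rw [h_const.deriv_eq, deriv_const]

theorem prog_gbar_zero_le (T : ℕ) (p : ℝ) (x : EuclideanSpace ℝ (Fin (T + 1))) :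
    prog 0 (gbar T p x 0) ≤ prog (1 / 4) x := by
  refine prog_le_iff.mpr fun i hi => ?_
  have h_Theta : Theta T x i = 1 :=
    Theta_eq_one_of_abs_le fun j hij => prog_le_iff.mp le_rfl j (hi.trans hij)
  simp [gbar, h_Theta]

theorem prog_gbar_le (T : ℕ) (p : ℝ) (x : EuclideanSpace ℝ (Fin (T + 1))) (ξ : ℝ) :
    prog 0 (gbar T p x ξ) ≤ prog (1 / 4) x + 1 := by
  refine prog_le_iff.mpr fun i hi => ?_
  obtain ⟨j, rfl⟩ : ∃ j, Fin.succ j = i :=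
    Fin.exists_succ_eq_of_ne_zero (Fin.pos_iff_ne_zero.mp (Nat.zero_lt_of_lt hi))
  have h_small : ∀ k : Fin (T + 1), prog (1 / 4) x ≤ k → |x k| ≤ 1 / 4 := prog_le_iff.mp le_rfl
  have h_pred : |x j.castSucc| ≤ 1 / 4 := h_small _ (Nat.le_of_succ_le_succ hi)
  have h_coord : |x j.succ| ≤ 1 / 4 := h_small _ (Nat.le_of_succ_le hi)
  have h_grad : gradient (chainF T) x j.succ = 0 :=
    gradient_chainF_succ_eq_zero (by linarith) (by linarith)
  simp [gbar, h_grad]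

/-- For `ξ ∼ Bernoulli(p)`, the smoothed estimator `ḡ_T` is a
probability-`p` zero-chain: the probability that `prog_0(ḡ_T(x,ξ)) = prog_{1/4}(x) + 1`
is at most `p`, and the probability that `prog_0(ḡ_T(x,ξ)) > prog_{1/4}(x) + 1` is `0`.
(Stated for dimension `T + 1`; the probability of an event is written out as
`p·𝟙{event at ξ=1} + (1−p)·𝟙{event at ξ=0}`.) -/
theorem gbar_probability_p_zero_chain
    (T : ℕ) (p : ℝ) (hp : p ∈ Set.Ioc (0 : ℝ) 1)
    (x : EuclideanSpace ℝ (Fin (T + 1))) :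
    ((if prog 0 (gbar T p x 1) = prog (1 / 4) x + 1 then p else 0)
        + (if prog 0 (gbar T p x 0) = prog (1 / 4) x + 1 then 1 - p else 0) ≤ p)
      ∧ ((if prog (1 / 4) x + 1 < prog 0 (gbar T p x 1) then p else 0)
        + (if prog (1 / 4) x + 1 < prog 0 (gbar T p x 0) then 1 - p else 0) = 0) := by
  have h_miss : prog 0 (gbar T p x 0) ≤ prog (1 / 4) x := prog_gbar_zero_le T p x
  have h_hit : prog 0 (gbar T p x 1) ≤ prog (1 / 4) x + 1 := prog_gbar_le T p x 1
  constructor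
  · rw [if_neg (Nat.lt_succ_of_le h_miss).ne, add_zero]
    split_ifs
    exacts [le_rfl, hp.1.le]
  · rw [if_neg h_hit.not_gt, if_neg (Nat.le_succ_of_le h_miss).not_gt, add_zero]
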